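/- For R, S, T, V ∈ PRT', let N_{R,S,T}(V) := {(I_1, I_2, I_3) : I_1, I_2, I_3 are pairwise disjoint subsets of L(V) with I_1 ∪ I_2 ∪ I_3 = L(V), V|I_1 = R, V|I_2 = S, and V|I_3 = T}. Then Σ_{W ∈ PRT'} #N_{R,S}(W)·#N_{W,T}(V) = #N_{R,S,T}(V) = Σ_{W ∈ PRT'} #N_{S,T}(W)·#N_{R,W}(V), where all sums have only finitely many nonzero terms. Consequently (R ⧢ S) ⧢ T = R ⧢ (S ⧢ T). -/

import Mathlib

inductive PTree : Type where
  | node : List PTree → PTree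

namespace PTree

/-- the single-vertex tree -/
def x : PTree := node []

/-- the number of leaves of a tree -/
def deg : PTree → ℕ
  | node l => max 1 (l.attach.map fun t => deg t.1).sum
decreasing_by
  have := List.sizeOf_lt_of_mem t.2
  simp; omega

/-- a tree is reduced if no vertex has arity 1 -/
inductive Reduced : PTree → Prop where
  | node (l : List PTree) (hlen : l.length ≠ 1) (h : ∀ t ∈ l, Reduced t) :
      Reduced (node l)

/-- the reduction of a tree -/
def red : PTree → PTree
  | node [t] => red t
  | node l => node (l.attach.map fun t => red t.1)
decreasing_by
  · simp; omega
  · have := List.sizeOf_lt_of_mem t.2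
    simp; omega

mutual
/-- the spanning subtree `T_I` determined by a set `I ⊆ range (deg T)` of leaf positions
(counted from the left, starting at `0`) -/
def sub : PTree → Finset ℕ → PTree
  | node l, I => node (subList l I)
/-- auxiliary: the list of spanning subtrees of the children, children without
selected leaves being dropped -/
def subList : List PTree → Finset ℕ → List PTree
  | [], _ => []
  | t :: ts, I =>
      (if (I.filter (· < t.deg)).Nonempty then [sub t (I.filter (· < t.deg))] else [])
        ++ subList ts ((I.filter fun j => t.deg ≤ j).image fun j => j - t.deg)
end

/-- the contraction `T|I`: the reduction of the spanning subtree, `1` (i.e. `none`) if `I = ∅` -/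
def contract (T : PTree) (I : Finset ℕ) : Option PTree :=
  if I = ∅ then none else some (red (sub T I))

end PTree

/-- `PRT'`: finite planar rooted trees together with the empty tree `1 = none` -/
abbrev OT := Option PTree

/-- `deg` on `PRT'` -/
def degO (o : OT) : ℕ := o.elim 0 PTree.deg

/-- membership in `PRT'` = reduced trees together with the empty tree `1` -/
def ROT (o : OT) : Prop := ∀ t, o = some t → t.Reduced

/-- contraction on `PRT'` -/
def contractO : OT → Finset ℕ → OT
  | none, _ => none
  | some t, I => PTree.contract t I

open Classical in
/-- `N_{S,T}(V)` as a finite set of subsets of the set of leaf positions of `V` -/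
noncomputable def NFinset (S T V : OT) : Finset (Finset ℕ) :=
  (Finset.range (degO V)).powerset.filter fun I =>
    contractO V I = S ∧ contractO V (Finset.range (degO V) \ I) = T

/-- `#N_{S,T}(V)` -/
noncomputable def Ncount (S T V : OT) : ℕ := (NFinset S T V).card

/-- the free `K`-module on `PRT'` (realized inside the free module on all of `Option PTree`;
the elements of the free module on `PRT'` are those whose support satisfies `ROT`) -/
abbrev AMod (K : Type) [Field K] := OT →₀ K

/-- `f` belongs to the free `K`-module on `PRT'` -/
def suppRed (K : Type) [Field K] (f : AMod K) : Prop := ∀ t ∈ f.support, ROT t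

/-- the planar shuffle product `S ⧢ T = Σ_{V ∈ PRT'} #N_{S,T}(V)·V` of two monomials -/
noncomputable def shuffleM (K : Type) [Field K] (S T : OT) : AMod K :=
  ∑ᶠ (V : OT) (_ : ROT V), Finsupp.single V ((Ncount S T V : K))

/-- the `K`-bilinear extension of the planar shuffle product -/
noncomputable def shuffleF (K : Type) [Field K] (f g : AMod K) : AMod K :=
  f.sum fun S a => g.sum fun T b => (a * b) • shuffleM K S T

/-- tensor-like product of a list of module elements, as a finitely supported
function on lists of basis elements -/
noncomputable def listProd (K : Type) [Field K] {σ : Type} : List (σ →₀ K) → (List σ →₀ K)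
  | [] => Finsupp.single [] 1
  | f :: fs => f.sum fun t a => (listProd K fs).sum fun ts b => Finsupp.single (t :: ts) (a * b)

/-- the `K`-multilinear extension of an operation on basis elements -/
noncomputable def mulExt (K : Type) [Field K] {σ τ : Type} (op : List σ → τ)
    (l : List (σ →₀ K)) : τ →₀ K :=
  (listProd K l).sum fun ts c => Finsupp.single (op ts) c

/-- `gr` : delete all entries equal to `1`, then return `1` if no entry remains,
the unique entry if exactly one remains, and the grafting `node` otherwise -/
def grO (ts : List OT) : OT :=
  match ts.reduceOption with
  | [] => none
  | [t] => some t
  | l => some (PTree.node l)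

/-- the `K`-multilinear extension of `gr` -/
noncomputable def grF (K : Type) [Field K] (l : List (AMod K)) : AMod K := mulExt K grO l

/-- the `K`-multilinear extension of the grafting `node` (junk value `0` on lists
containing the empty tree `1`, which never occurs in its uses here) -/
noncomputable def nodeF (K : Type) [Field K] (l : List (AMod K)) : AMod K :=
  (listProd K l).sum fun ts c =>
    match (ts.mapM (id : Option PTree → Option PTree) : Option (List PTree)) with
    | some l' => Finsupp.single (some (PTree.node l')) c
    | none => 0

open Classical in
/-- `N_{R,S,T}(V)`: triples `(I_1,I_2,I_3)` of pairwise disjoint subsets of `L(V)` covering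
`L(V)` with `V|I_1 = R`, `V|I_2 = S`, `V|I_3 = T`. -/
noncomputable def NFinset3 (R S T V : OT) : Finset (Finset ℕ × Finset ℕ × Finset ℕ) :=
  ((Finset.range (degO V)).powerset ×ˢ (Finset.range (degO V)).powerset
      ×ˢ (Finset.range (degO V)).powerset).filter fun q =>
    Disjoint q.1 q.2.1 ∧ Disjoint q.1 q.2.2 ∧ Disjoint q.2.1 q.2.2 ∧
    q.1 ∪ q.2.1 ∪ q.2.2 = Finset.range (degO V) ∧
    contractO V q.1 = R ∧ contractO V q.2.1 = S ∧ contractO V q.2.2 = T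

/-!
Contraction is functorial: contracting `V` to `J` and then `V|J` to a set of leaf positions `I`
is the same as contracting `V` to the leaves of `J` whose rank in `J` lies in `I`. Hence a pair
`(J, I)` counted by `∑ W, #N_{R,S}(W) * #N_{W,T}(V)`, with `J ∈ N_{W,T}(V)` and `I ∈ N_{R,S}(V|J)`,
is the same datum as the triple of the copy of `I` in `J`, its complement in `J`, and the
complement of `J`. The other sum follows from the symmetry of both counts under permuting
`R, S, T`, and associativity of `⧢` is the resulting identity read off coefficientwise.
-/

namespace PTree

/-! ### Degrees -/

theorem deg_node (l : List PTree) : deg (node l) = max 1 (l.map deg).sum := by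
  rw [deg, List.attach_map_val]

theorem deg_pos (t : PTree) : 0 < deg t := by
  cases t
  rw [deg_node]
  exact lt_max_of_lt_left one_pos

theorem length_le_sum_deg (l : List PTree) : l.length ≤ (l.map deg).sum := by
  simpa using List.length_le_sum_of_one_le (l.map deg)
    (by simpa using fun t _ => Nat.one_le_of_lt (deg_pos t))

theorem deg_node_of_ne_nil {l : List PTree} (hl : l ≠ []) : deg (node l) = (l.map deg).sum := by
  rw [deg_node, max_eq_right ((List.length_pos_of_ne_nil hl).trans_le (length_le_sum_deg l))]

theorem deg_lt_deg_node {l : List PTree} (hl : l.length ≠ 1) {t : PTree} (ht : t ∈ l) :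
    t.deg < (node l).deg := by
  rw [deg_node_of_ne_nil (List.ne_nil_of_mem ht)]
  obtain ⟨before, after, rfl⟩ := List.append_of_mem ht
  have := length_le_sum_deg before
  have := length_le_sum_deg after
  simp only [List.length_append, List.length_cons, List.map_append, List.map_cons,
    List.sum_append, List.sum_cons] at hl ⊢
  omega

theorem finite_reduced_deg_lt (n : ℕ) : {t : PTree | t.Reduced ∧ t.deg < n}.Finite := by
  induction n with
  | zero => simp
  | succ n ih =>
    have : Finite {t : PTree | t.Reduced ∧ t.deg < n} := ih
    refine ((List.finite_length_le {t : PTree | t.Reduced ∧ t.deg < n} n).image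
      fun l => node (l.map Subtype.val)).subset ?_
    rintro _ ⟨⟨l, hlen, hred⟩, hdeg⟩
    have hmem : ∀ s ∈ l, s ∈ {t : PTree | t.Reduced ∧ t.deg < n} := fun s hs =>
      ⟨hred s hs, (deg_lt_deg_node hlen hs).trans_le (Nat.lt_succ_iff.mp hdeg)⟩
    have hlength : l.length ≤ n := by
      have := length_le_sum_deg l
      rw [deg_node] at hdeg
      omega
    lift l to List {t : PTree | t.Reduced ∧ t.deg < n} using hmem
    exact ⟨l, by simpa using hlength, rfl⟩

/-! ### Grafting -/

/-- The operation `gr` on a list of nonempty trees: the grafting of two or more trees, a single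
tree itself, and `1` for no trees at all. -/
def graft (l : List PTree) : OT := grO (l.map some)

theorem graft_nil : graft [] = none := rfl

theorem graft_singleton (t : PTree) : graft [t] = some t := rfl

theorem graft_of_two_le_length {l : List PTree} (hl : 2 ≤ l.length) :
    graft l = some (node l) := by
  match l, hl with
  | s :: t :: l, _ => simp [graft, grO, List.reduceOption]

theorem graft_toList (o : OT) : graft o.toList = o := by
  cases o <;> rfl

theorem some_red_node {l : List PTree} (hl : l ≠ []) : some (red (node l)) = graft (l.map red) := by
  match l, hl with
  | [t], _ => rw [red, List.map_singleton, graft_singleton]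
  | s :: t :: l, _ =>
    rw [red, List.attach_map_val, graft_of_two_le_length (by simp)]
    simp

theorem degO_graft (l : List PTree) : degO (graft l) = (l.map deg).sum := by
  match l with
  | [] => rfl
  | [t] => simp [graft_singleton, degO]
  | s :: t :: l =>
    rw [graft_of_two_le_length (by simp)]
    exact deg_node_of_ne_nil (List.cons_ne_nil _ _)

theorem sum_deg_toList (o : OT) : (o.toList.map deg).sum = degO o := by
  rw [← degO_graft, graft_toList]

theorem ROT_graft {l : List PTree} (hl : ∀ t ∈ l, Reduced t) : ROT (graft l) := by
  match l with
  | [] => simp [ROT, graft_nil]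
  | [t] => simpa [ROT, graft_singleton] using hl
  | s :: t :: l =>
    rw [graft_of_two_le_length (by simp)]
    rintro _ ⟨⟩
    exact Reduced.node _ (by simp) hl

/-! ### Restriction to a predicate on leaf positions -/

mutual
/-- The contraction of a tree to the leaf positions selected by a Boolean predicate, computed in
one recursion. Encoding subsets as predicates on all of `ℕ` turns the passage to a child
into a shift of the argument. -/
def restrict : PTree → (ℕ → Bool) → OT
  | node [], p => if p 0 then some x else none
  | node (t :: ts), p => graft (restrictList (t :: ts) p)
/-- The nonempty restrictions of the trees of a forest, whose leaves are numbered consecutively. -/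
def restrictList : List PTree → (ℕ → Bool) → List PTree
  | [], _ => []
  | t :: ts, p => (restrict t p).toList ++ restrictList ts fun i => p (t.deg + i)
end

theorem restrict_node {l : List PTree} (hl : l ≠ []) (p : ℕ → Bool) :
    restrict (node l) p = graft (restrictList l p) := by
  match l, hl with
  | t :: ts, _ => rw [restrict]

theorem restrictList_append (l m : List PTree) (p : ℕ → Bool) :
    restrictList (l ++ m) p =
      restrictList l p ++ restrictList m fun i => p ((l.map deg).sum + i) := by
  induction l generalizing p with
  | nil => simp [restrictList]
  | cons t ts ih =>
    simp only [List.cons_append, restrictList, ih, List.map_cons, List.sum_cons,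
      List.append_assoc, add_assoc]

theorem restrictList_toList (o : OT) (p : ℕ → Bool) :
    restrictList o.toList p = (o.bind (restrict · p)).toList := by
  cases o <;> simp [restrictList]

theorem graft_bind_restrict (l : List PTree) (p : ℕ → Bool) :
    (graft l).bind (restrict · p) = graft (restrictList l p) := by
  match l with
  | [] => simp [graft_nil, restrictList]
  | [t] => simp [graft_singleton, restrictList, graft_toList]
  | s :: t :: l =>
    rw [graft_of_two_le_length (by simp), Option.bind_some, restrict_node (List.cons_ne_nil _ _)]

mutual
theorem restrict_congr : ∀ (t : PTree) {p q : ℕ → Bool}, (∀ i < t.deg, p i = q i) →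
    restrict t p = restrict t q
  | node [], p, q, h => by rw [restrict, restrict, h 0 (deg_pos _)]
  | node (t :: ts), p, q, h => by
    rw [deg_node_of_ne_nil (List.cons_ne_nil _ _)] at h
    rw [restrict, restrict, restrictList_congr (t :: ts) h]
theorem restrictList_congr : ∀ (l : List PTree) {p q : ℕ → Bool},
    (∀ i < (l.map deg).sum, p i = q i) → restrictList l p = restrictList l q
  | [], _, _, _ => by rw [restrictList, restrictList]
  | t :: ts, p, q, h => by
    rw [List.map_cons, List.sum_cons] at h
    rw [restrictList, restrictList, restrict_congr t fun i hi => h i (by omega),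
      restrictList_congr ts fun i hi => h (t.deg + i) (by omega)]
end

mutual
theorem degO_restrict : ∀ (t : PTree) (p : ℕ → Bool),
    degO (restrict t p) = Nat.count (fun i => p i) t.deg
  | node [], p => by
    by_cases h : p 0 <;> simp [restrict, h, degO, x, deg_node, Nat.count_succ]
  | node (t :: ts), p => by
    rw [restrict, degO_graft, sum_deg_restrictList, deg_node_of_ne_nil (List.cons_ne_nil _ _)]
theorem sum_deg_restrictList : ∀ (l : List PTree) (p : ℕ → Bool),
    ((restrictList l p).map deg).sum = Nat.count (fun i => p i) (l.map deg).sum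
  | [], p => by simp [restrictList]
  | t :: ts, p => by
    rw [restrictList, List.map_append, List.sum_append, sum_deg_toList, degO_restrict t,
      sum_deg_restrictList ts, List.map_cons, List.sum_cons, Nat.count_add]
end

mutual
theorem ROT_restrict : ∀ (t : PTree) (p : ℕ → Bool), ROT (restrict t p)
  | node [], p => by
    rw [restrict]
    split_ifs
    · rintro _ ⟨⟩
      exact Reduced.node _ (by simp) (by simp)
    · simp [ROT]
  | node (t :: ts), p => by
    rw [restrict]
    exact ROT_graft (reduced_of_mem_restrictList (t :: ts) p)
theorem reduced_of_mem_restrictList : ∀ (l : List PTree) (p : ℕ → Bool),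
    ∀ s ∈ restrictList l p, Reduced s
  | [], _ => by simp [restrictList]
  | t :: ts, p => by
    intro s hs
    rw [restrictList, List.mem_append, Option.mem_toList] at hs
    exact hs.elim (ROT_restrict t p s) (reduced_of_mem_restrictList ts _ s)
end

/-- The composite of two successive selections: `q` numbers the positions selected by `p`
consecutively, and a position survives if `p` selects it and `q` selects its new number. -/
def subselect (p q : ℕ → Bool) : ℕ → Bool := fun i => p i && q (Nat.count (fun j => p j) i)

theorem subselect_shift (p q : ℕ → Bool) (a : ℕ) :
    (fun i => subselect p q (a + i)) =
      subselect (fun i => p (a + i)) fun i => q (Nat.count (fun j => p j) a + i) := by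
  funext i
  simp only [subselect, Nat.count_add]

mutual
theorem restrict_bind_restrict : ∀ (t : PTree) (p q : ℕ → Bool),
    (restrict t p).bind (restrict · q) = restrict t (subselect p q)
  | node [], p, q => by
    by_cases h : p 0 <;> simp [restrict, h, subselect, x]
  | node (t :: ts), p, q => by
    rw [restrict, restrict, graft_bind_restrict, restrictList_restrictList]
theorem restrictList_restrictList : ∀ (l : List PTree) (p q : ℕ → Bool),
    restrictList (restrictList l p) q = restrictList l (subselect p q)
  | [], p, q => by simp [restrictList]
  | t :: ts, p, q => by
    rw [restrictList, restrictList, restrictList_append, restrictList_toList,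
      restrict_bind_restrict t, subselect_shift, ← restrictList_restrictList ts, sum_deg_toList,
      degO_restrict]
end

end PTree

/-! ### Ranks in a finite set of positions -/

theorem count_mem_eq_card {I : Finset ℕ} {n : ℕ} (hI : I ⊆ Finset.range n) :
    Nat.count (· ∈ I) n = I.card := by
  rw [Nat.count_eq_card_filter_range, Finset.filter_mem_eq_inter, Finset.inter_eq_right.mpr hI]

/-- The set of those elements of `J` whose rank in `J`, the number of smaller elements of `J`, lies
in `I`. If `J` is a set of leaves of `V`, these are the leaves of `V` corresponding to the leaf
positions `I` of `V|J`. -/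
def rankPreimage (J I : Finset ℕ) : Finset ℕ := J.filter fun j => Nat.count (· ∈ J) j ∈ I

theorem rankPreimage_subset (J I : Finset ℕ) : rankPreimage J I ⊆ J := Finset.filter_subset _ _

theorem count_mem_injOn (J : Finset ℕ) : Set.InjOn (Nat.count (· ∈ J)) J :=
  fun _ ha _ hb h => Nat.count_injective ha hb h

theorem count_mem_lt_card {J : Finset ℕ} {j : ℕ} (hj : j ∈ J) : Nat.count (· ∈ J) j < J.card := by
  obtain ⟨n, hn⟩ := J.exists_nat_subset_range
  rw [← count_mem_eq_card hn]
  exact Nat.count_strict_mono hj (Finset.mem_range.mp (hn hj))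

theorem image_count_mem (J : Finset ℕ) :
    J.image (Nat.count (· ∈ J)) = Finset.range J.card := by
  refine Finset.eq_of_subset_of_card_le
    (Finset.image_subset_iff.mpr fun j hj => Finset.mem_range.mpr (count_mem_lt_card hj)) ?_
  rw [Finset.card_range, Finset.card_image_of_injOn (count_mem_injOn J)]

theorem image_rankPreimage {J I : Finset ℕ} (hI : I ⊆ Finset.range J.card) :
    (rankPreimage J I).image (Nat.count (· ∈ J)) = I := by
  rw [rankPreimage, ← Finset.filter_image (p := (· ∈ I)), image_count_mem,
    Finset.filter_mem_eq_inter, Finset.inter_eq_right.mpr hI]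

theorem rankPreimage_image {J A : Finset ℕ} (hA : A ⊆ J) :
    rankPreimage J (A.image (Nat.count (· ∈ J))) = A := by
  ext j
  simp only [rankPreimage, Finset.mem_filter, Finset.mem_image]
  constructor
  · rintro ⟨hj, a, ha, hrank⟩
    rwa [← count_mem_injOn J (hA ha) hj hrank]
  · exact fun hj => ⟨hA hj, j, hj, rfl⟩

theorem rankPreimage_compl (J I : Finset ℕ) :
    rankPreimage J (Finset.range J.card \ I) = J \ rankPreimage J I := by
  ext j
  simp only [rankPreimage, Finset.mem_filter, Finset.mem_sdiff, Finset.mem_range]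
  have := count_mem_lt_card (J := J) (j := j)
  tauto

/-! ### Contraction as restriction -/

theorem mem_image_sub_filter_le {I : Finset ℕ} {a i : ℕ} :
    i ∈ (I.filter (a ≤ ·)).image (· - a) ↔ a + i ∈ I := by
  simp only [Finset.mem_image, Finset.mem_filter]
  constructor
  · rintro ⟨j, ⟨hj, haj⟩, rfl⟩
    rwa [Nat.add_sub_cancel' haj]
  · exact fun h => ⟨a + i, ⟨h, Nat.le_add_right a i⟩, Nat.add_sub_cancel_left a i⟩

namespace PTree

theorem restrict_false (t : PTree) : restrict t (fun _ => false) = none := by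
  have hdeg : degO (restrict t fun _ => false) = 0 := by simp [degO_restrict]
  cases h : restrict t fun _ => false with
  | none => rfl
  | some s =>
    rw [h] at hdeg
    exact absurd hdeg (deg_pos s).ne'

mutual
theorem contract_eq_restrict : ∀ (t : PTree) {I : Finset ℕ}, I ⊆ Finset.range t.deg →
    contract t I = restrict t fun i => decide (i ∈ I)
  | node [], I, hI => by
    have hI' : I ⊆ {0} := by simpa [deg_node] using hI
    obtain rfl | rfl := Finset.subset_singleton_iff.mp hI' <;>
      simp [contract, restrict, sub, subList, red, x]
  | node (t :: ts), I, hI => by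
    obtain rfl | hne := I.eq_empty_or_nonempty
    · simp [contract, restrict_false]
    rw [deg_node_of_ne_nil (List.cons_ne_nil _ _)] at hI
    have hmap := map_red_subList (t :: ts) hI
    have hsub : subList (t :: ts) I ≠ [] := by
      intro hnil
      have hcount := sum_deg_restrictList (t :: ts) fun i => decide (i ∈ I)
      rw [← hmap, hnil] at hcount
      simp only [decide_eq_true_eq, count_mem_eq_card hI] at hcount
      exact hne.card_ne_zero hcount.symm
    rw [contract, if_neg hne.ne_empty, sub, some_red_node hsub, hmap, restrict]
theorem map_red_subList : ∀ (l : List PTree) {I : Finset ℕ},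
    I ⊆ Finset.range (l.map deg).sum →
    (subList l I).map red = restrictList l fun i => decide (i ∈ I)
  | [], I, _ => by simp [subList, restrictList]
  | t :: ts, I, hI => by
    set head := I.filter (· < t.deg) with hhead
    have htail : (I.filter (t.deg ≤ ·)).image (· - t.deg) ⊆ Finset.range (ts.map deg).sum := by
      intro i hi
      have := Finset.mem_range.mp (hI (mem_image_sub_filter_le.mp hi))
      rw [List.map_cons, List.sum_cons] at this
      exact Finset.mem_range.mpr (by omega)
    have hfirst : restrict t (fun i => decide (i ∈ I)) = contract t head := by
      rw [contract_eq_restrict t fun i hi => Finset.mem_range.mpr (Finset.mem_filter.mp hi).2]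
      exact restrict_congr t fun i hi => by simp [hi]
    rw [subList, restrictList, List.map_append, map_red_subList ts htail, hfirst, contract]
    simp only [mem_image_sub_filter_le, ← hhead]
    obtain h | h := head.eq_empty_or_nonempty
    · simp [h]
    · simp [h, h.ne_empty]
end

end PTree

open PTree

section Contraction

variable {V : OT} {I J : Finset ℕ}

theorem contractO_eq_bind_restrict (hI : I ⊆ Finset.range (degO V)) :
    contractO V I = V.bind (restrict · fun i => decide (i ∈ I)) := by
  cases V with
  | none => rfl
  | some t => exact contract_eq_restrict t hI

theorem ROT_contractO (hI : I ⊆ Finset.range (degO V)) : ROT (contractO V I) := by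
  rw [contractO_eq_bind_restrict hI]
  cases V with
  | none => simp [ROT]
  | some t => exact ROT_restrict t _

theorem degO_contractO (hI : I ⊆ Finset.range (degO V)) : degO (contractO V I) = I.card := by
  rw [contractO_eq_bind_restrict hI]
  cases V with
  | none =>
    obtain rfl : I = ∅ := by simpa [degO] using hI
    rfl
  | some t =>
    rw [Option.bind_some, degO_restrict]
    simp only [decide_eq_true_eq]
    exact count_mem_eq_card hI

theorem contractO_contractO (hJ : J ⊆ Finset.range (degO V)) (hI : I ⊆ Finset.range J.card) :
    contractO (contractO V J) I = contractO V (rankPreimage J I) := by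
  rw [contractO_eq_bind_restrict (V := contractO V J) (by rwa [degO_contractO hJ]),
    contractO_eq_bind_restrict hJ,
    contractO_eq_bind_restrict ((rankPreimage_subset J I).trans hJ)]
  cases V with
  | none => rfl
  | some t =>
    rw [Option.bind_some, Option.bind_some, restrict_bind_restrict]
    congr 1
    funext i
    simp [subselect, rankPreimage]

end Contraction

/-! ### Counting pairs and triples of leaf sets -/

section Counting

variable {R S T V : OT} {I J : Finset ℕ}

theorem mem_NFinset : I ∈ NFinset S T V ↔
    I ⊆ Finset.range (degO V) ∧ contractO V I = S ∧
      contractO V (Finset.range (degO V) \ I) = T := by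
  simp [NFinset]

theorem mem_NFinset3 {q : Finset ℕ × Finset ℕ × Finset ℕ} : q ∈ NFinset3 R S T V ↔
    Disjoint q.1 q.2.1 ∧ Disjoint q.1 q.2.2 ∧ Disjoint q.2.1 q.2.2 ∧
    q.1 ∪ q.2.1 ∪ q.2.2 = Finset.range (degO V) ∧
    contractO V q.1 = R ∧ contractO V q.2.1 = S ∧ contractO V q.2.2 = T := by
  simp only [NFinset3, Finset.mem_filter, Finset.mem_product, Finset.mem_powerset,
    and_iff_right_iff_imp]
  rintro ⟨-, -, -, hcover, -⟩
  simp only [← hcover, Finset.union_assoc, Finset.subset_union_left, true_and]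
  exact ⟨Finset.subset_union_left.trans Finset.subset_union_right,
    Finset.subset_union_right.trans Finset.subset_union_right⟩

theorem Ncount_comm (S T V : OT) : Ncount S T V = Ncount T S V := by
  have hmaps (S T : OT) : ∀ I ∈ NFinset S T V, Finset.range (degO V) \ I ∈ NFinset T S V := by
    intro I hI
    obtain ⟨hsub, hS, hT⟩ := mem_NFinset.mp hI
    exact mem_NFinset.mpr
      ⟨Finset.sdiff_subset, hT, by rwa [Finset.sdiff_sdiff_eq_self hsub]⟩
  have hinvol (S T : OT) : ∀ I ∈ NFinset S T V,
      Finset.range (degO V) \ (Finset.range (degO V) \ I) = I :=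
    fun I hI => Finset.sdiff_sdiff_eq_self (mem_NFinset.mp hI).1
  exact Finset.card_nbij' _ _ (hmaps S T) (hmaps T S) (hinvol S T) (hinvol T S)

theorem card_NFinset3_rotate (R S T V : OT) :
    (NFinset3 S T R V).card = (NFinset3 R S T V).card := by
  refine Finset.card_nbij' (fun q => (q.2.2, q.1, q.2.1)) (fun q => (q.2.1, q.2.2, q.1))
    ?_ ?_ (fun _ _ => rfl) (fun _ _ => rfl)
  · intro q hq
    obtain ⟨h₁₂, h₁₃, h₂₃, hcover, h₁, h₂, h₃⟩ := mem_NFinset3.mp hq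
    refine mem_NFinset3.mpr ⟨h₁₃.symm, h₂₃.symm, h₁₂, ?_, h₃, h₁, h₂⟩
    rw [← hcover, Finset.union_assoc, Finset.union_comm]
  · intro q hq
    obtain ⟨h₁₂, h₁₃, h₂₃, hcover, h₁, h₂, h₃⟩ := mem_NFinset3.mp hq
    refine mem_NFinset3.mpr ⟨h₂₃, h₁₂.symm, h₁₃.symm, ?_, h₂, h₃, h₁⟩
    rw [← hcover, Finset.union_assoc q.1, Finset.union_comm]

theorem degO_eq_add_of_Ncount_ne_zero (h : Ncount S T V ≠ 0) : degO V = degO S + degO T := by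
  obtain ⟨I, hI⟩ := Finset.card_ne_zero.mp h
  obtain ⟨hsub, rfl, rfl⟩ := mem_NFinset.mp hI
  rw [degO_contractO hsub, degO_contractO Finset.sdiff_subset, add_comm,
    Finset.card_sdiff_add_card_eq_card hsub, Finset.card_range]

theorem finite_ROT_degO_lt (n : ℕ) : {V : OT | ROT V ∧ degO V < n}.Finite := by
  refine (((finite_reduced_deg_lt n).image some).insert none).subset ?_
  rintro (_ | t) ⟨hred, hdeg⟩
  · exact Set.mem_insert _ _
  · exact Set.mem_insert_of_mem _ ⟨t, ⟨hred t rfl, hdeg⟩, rfl⟩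

theorem finite_Ncount_ne_zero (S T : OT) : {V : OT | ROT V ∧ Ncount S T V ≠ 0}.Finite :=
  (finite_ROT_degO_lt (degO S + degO T + 1)).subset fun _ hV =>
    ⟨hV.1, Nat.lt_succ_of_le (degO_eq_add_of_Ncount_ne_zero hV.2).le⟩

/-- The finite set of the elements of `PRT'` occurring in `S ⧢ T` over a field of characteristic
zero, over which the sums defining shuffle products become finite sums. -/
noncomputable def shuffleSupport (S T : OT) : Finset OT := (finite_Ncount_ne_zero S T).toFinset

theorem mem_shuffleSupport : V ∈ shuffleSupport S T ↔ ROT V ∧ Ncount S T V ≠ 0 := by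
  simp [shuffleSupport]

theorem finsum_ROT_eq_sum_shuffleSupport {M : Type*} [AddCommMonoid M] {f : OT → M}
    (hf : ∀ W, Ncount S T W = 0 → f W = 0) :
    ∑ᶠ (W : OT) (_ : ROT W), f W = ∑ W ∈ shuffleSupport S T, f W := by
  refine finsum_mem_eq_sum_of_inter_support_eq (s := {W | ROT W}) f ?_
  ext W
  simp only [Set.mem_inter_iff, Set.mem_ofPred_eq, Function.mem_support, Finset.mem_coe,
    mem_shuffleSupport]
  have := hf W
  tauto

open Classical in
theorem Ncount_contractO (hJ : J ⊆ Finset.range (degO V)) :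
    Ncount R S (contractO V J) =
      (J.powerset.filter fun A => contractO V A = R ∧ contractO V (J \ A) = S).card := by
  refine Finset.card_nbij' (rankPreimage J) (Finset.image (Nat.count (· ∈ J))) ?_ ?_ ?_ ?_
  · intro I hI
    obtain ⟨hsub, hR, hS⟩ := mem_NFinset.mp hI
    rw [degO_contractO hJ] at hsub hS
    rw [contractO_contractO hJ hsub] at hR
    rw [contractO_contractO hJ Finset.sdiff_subset, rankPreimage_compl] at hS
    exact Finset.mem_filter.mpr
      ⟨Finset.mem_powerset.mpr (rankPreimage_subset J I), hR, hS⟩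
  · intro A hA
    obtain ⟨hsub, hR, hS⟩ := Finset.mem_filter.mp hA
    rw [Finset.mem_powerset] at hsub
    have himage : A.image (Nat.count (· ∈ J)) ⊆ Finset.range J.card :=
      image_count_mem J ▸ Finset.image_subset_image hsub
    refine mem_NFinset.mpr ?_
    rw [degO_contractO hJ, contractO_contractO hJ himage,
      contractO_contractO hJ Finset.sdiff_subset, rankPreimage_compl, rankPreimage_image hsub]
    exact ⟨himage, hR, hS⟩
  · intro I hI
    have hsub := (mem_NFinset.mp hI).1
    rw [degO_contractO hJ] at hsub
    exact image_rankPreimage hsub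
  · exact fun A hA => rankPreimage_image (Finset.mem_powerset.mp (Finset.mem_filter.mp hA).1)

open Classical in
theorem card_NFinset3_eq_sum (R S T V : OT) : (NFinset3 R S T V).card =
    ∑ J ∈ (Finset.range (degO V)).powerset with contractO V (Finset.range (degO V) \ J) = T,
      Ncount R S (contractO V J) := by
  rw [Finset.sum_congr rfl fun J hJ =>
    Ncount_contractO (Finset.mem_powerset.mp (Finset.mem_filter.mp hJ).1), ← Finset.card_sigma]
  refine Finset.card_nbij' (fun q => ⟨q.1 ∪ q.2.1, q.1⟩)
    (fun p => (p.2, p.1 \ p.2, Finset.range (degO V) \ p.1)) ?_ ?_ ?_ ?_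
  · rintro ⟨A, B, C⟩ hq
    obtain ⟨hAB, hAC, hBC, hcover, hR, hS, hT⟩ := mem_NFinset3.mp hq
    have hcompl : Finset.range (degO V) \ (A ∪ B) = C := by
      rw [← hcover, Finset.union_sdiff_cancel_left (Finset.disjoint_union_left.mpr ⟨hAC, hBC⟩)]
    have hsub : A ∪ B ⊆ Finset.range (degO V) := hcover ▸ Finset.subset_union_left
    simpa [hcompl, Finset.union_sdiff_cancel_left hAB, hsub] using ⟨hT, hR, hS⟩
  · rintro ⟨J, A⟩ hp
    simp only [Finset.coe_sigma, Set.mem_sigma_iff, Finset.mem_coe, Finset.mem_filter,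
      Finset.mem_powerset] at hp
    obtain ⟨⟨hJ, hT⟩, hA, hR, hS⟩ := hp
    refine mem_NFinset3.mpr ⟨Finset.disjoint_sdiff, Finset.disjoint_sdiff.mono_left hA,
      Finset.disjoint_sdiff.mono_left Finset.sdiff_subset, ?_, hR, hS, hT⟩
    rw [Finset.union_sdiff_of_subset hA, Finset.union_sdiff_of_subset hJ]
  · rintro ⟨A, B, C⟩ hq
    obtain ⟨hAB, hAC, hBC, hcover, -⟩ := mem_NFinset3.mp hq
    simp only [← hcover, Finset.union_sdiff_cancel_left hAB,
      Finset.union_sdiff_cancel_left (Finset.disjoint_union_left.mpr ⟨hAC, hBC⟩)]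
  · rintro ⟨J, A⟩ hp
    simp only [Finset.coe_sigma, Set.mem_sigma_iff, Finset.mem_coe, Finset.mem_filter,
      Finset.mem_powerset] at hp
    simp only [Finset.union_sdiff_of_subset hp.2.1]

theorem sum_Ncount_mul_Ncount_left (R S T V : OT) :
    ∑ W ∈ shuffleSupport R S, Ncount R S W * Ncount W T V = (NFinset3 R S T V).card := by
  classical
  rw [card_NFinset3_eq_sum]
  set X := (Finset.range (degO V)).powerset.filter
    fun J => contractO V (Finset.range (degO V) \ J) = T with hX
  have hfiber (W : OT) : NFinset W T V = X.filter (contractO V · = W) := by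
    ext J
    simp only [mem_NFinset, hX, Finset.mem_filter, Finset.mem_powerset]
    tauto
  calc ∑ W ∈ shuffleSupport R S, Ncount R S W * Ncount W T V
    _ = ∑ W ∈ shuffleSupport R S, ∑ J ∈ X with contractO V J = W, Ncount R S (contractO V J) := by
      refine Finset.sum_congr rfl fun W _ => ?_
      rw [Finset.sum_congr rfl fun J hJ => by rw [(Finset.mem_filter.mp hJ).2],
        Finset.sum_const, smul_eq_mul, mul_comm, ← hfiber, Ncount]
    _ = ∑ J ∈ X with contractO V J ∈ shuffleSupport R S, Ncount R S (contractO V J) :=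
      Finset.sum_fiberwise_eq_sum_filter _ _ _ _
    _ = ∑ J ∈ X, Ncount R S (contractO V J) := by
      refine Finset.sum_filter_of_ne fun J hJ hne => mem_shuffleSupport.mpr ⟨?_, hne⟩
      exact ROT_contractO (Finset.mem_powerset.mp (Finset.mem_filter.mp hJ).1)

theorem sum_Ncount_mul_Ncount_right (R S T V : OT) :
    ∑ W ∈ shuffleSupport S T, Ncount S T W * Ncount R W V = (NFinset3 R S T V).card := by
  simp only [Ncount_comm R]
  rw [sum_Ncount_mul_Ncount_left, card_NFinset3_rotate]

end Counting

/-! ### The shuffle product -/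

section Shuffle

variable (K : Type) [Field K] (R S T V : OT)

theorem shuffleM_eq_sum :
    shuffleM K S T = ∑ V ∈ shuffleSupport S T, Finsupp.single V (Ncount S T V : K) :=
  finsum_ROT_eq_sum_shuffleSupport fun W hW => by simp [hW]

open Classical in
theorem shuffleM_apply : shuffleM K S T V = if ROT V then (Ncount S T V : K) else 0 := by
  simp only [shuffleM_eq_sum, Finsupp.finsetSum_apply, Finsupp.single_apply, Finset.sum_ite_eq',
    mem_shuffleSupport]
  by_cases h : Ncount S T V = 0 <;> simp [h]

theorem shuffleF_single_single :
    shuffleF K (Finsupp.single S 1) (Finsupp.single T 1) = shuffleM K S T := by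
  simp [shuffleF]

theorem shuffleF_shuffleM_single :
    shuffleF K (shuffleM K R S) (Finsupp.single T 1) =
      ∑ W ∈ shuffleSupport R S, (Ncount R S W : K) • shuffleM K W T := by
  rw [shuffleF, shuffleM_eq_sum, ← Finsupp.sum_finsetSum_index] <;> simp [add_smul]

theorem shuffleF_single_shuffleM :
    shuffleF K (Finsupp.single R 1) (shuffleM K S T) =
      ∑ W ∈ shuffleSupport S T, (Ncount S T W : K) • shuffleM K R W := by
  rw [shuffleF, Finsupp.sum_single_index (by simp), shuffleM_eq_sum,
    ← Finsupp.sum_finsetSum_index] <;> simp [add_smul]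

theorem shuffleF_assoc :
    shuffleF K (shuffleF K (Finsupp.single R 1) (Finsupp.single S 1)) (Finsupp.single T 1) =
      shuffleF K (Finsupp.single R 1)
        (shuffleF K (Finsupp.single S 1) (Finsupp.single T 1)) := by
  classical
  rw [shuffleF_single_single, shuffleF_single_single, shuffleF_shuffleM_single,
    shuffleF_single_shuffleM]
  ext V
  simp only [Finsupp.finsetSum_apply, Finsupp.smul_apply, shuffleM_apply, smul_eq_mul]
  by_cases hV : ROT V
  · simp only [hV, if_true]
    exact_mod_cast congrArg (Nat.cast : ℕ → K)
      ((sum_Ncount_mul_Ncount_left R S T V).trans (sum_Ncount_mul_Ncount_right R S T V).symm)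
  · simp [hV]

end Shuffle

theorem Ncount3_and_shuffle_assoc_general (K : Type) [Field K] (R S T V : OT) :
    {W : OT | ROT W ∧ Ncount R S W * Ncount W T V ≠ 0}.Finite ∧
      {W : OT | ROT W ∧ Ncount S T W * Ncount R W V ≠ 0}.Finite ∧
      (∑ᶠ (W : OT) (_ : ROT W), Ncount R S W * Ncount W T V) = (NFinset3 R S T V).card ∧
      ((NFinset3 R S T V).card
        = ∑ᶠ (W : OT) (_ : ROT W), Ncount S T W * Ncount R W V) ∧
      shuffleF K (shuffleF K (Finsupp.single R 1) (Finsupp.single S 1)) (Finsupp.single T 1)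
        = shuffleF K (Finsupp.single R 1)
            (shuffleF K (Finsupp.single S 1) (Finsupp.single T 1)) := by
  refine ⟨?_, ?_, ?_, ?_, shuffleF_assoc K R S T⟩
  · exact (finite_Ncount_ne_zero R S).subset fun W hW => ⟨hW.1, left_ne_zero_of_mul hW.2⟩
  · exact (finite_Ncount_ne_zero S T).subset fun W hW => ⟨hW.1, left_ne_zero_of_mul hW.2⟩
  · rw [finsum_ROT_eq_sum_shuffleSupport fun W hW => by rw [hW, zero_mul],
      sum_Ncount_mul_Ncount_left]
  · rw [finsum_ROT_eq_sum_shuffleSupport fun W hW => by rw [hW, zero_mul],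
      sum_Ncount_mul_Ncount_right]

/-- `Σ_{W ∈ PRT'} #N_{R,S}(W)·#N_{W,T}(V) = #N_{R,S,T}(V)
= Σ_{W ∈ PRT'} #N_{S,T}(W)·#N_{R,W}(V)`, all sums having only finitely many nonzero terms;
consequently `(R ⧢ S) ⧢ T = R ⧢ (S ⧢ T)`. -/
theorem Ncount3_and_shuffle_assoc (K : Type) [Field K] (R S T V : OT)
    (hR : ROT R) (hS : ROT S) (hT : ROT T) (hV : ROT V) :
    {W : OT | ROT W ∧ Ncount R S W * Ncount W T V ≠ 0}.Finite ∧
      {W : OT | ROT W ∧ Ncount S T W * Ncount R W V ≠ 0}.Finite ∧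
      (∑ᶠ (W : OT) (_ : ROT W), Ncount R S W * Ncount W T V) = (NFinset3 R S T V).card ∧
      ((NFinset3 R S T V).card
        = ∑ᶠ (W : OT) (_ : ROT W), Ncount S T W * Ncount R W V) ∧
      shuffleF K (shuffleF K (Finsupp.single R 1) (Finsupp.single S 1)) (Finsupp.single T 1)
        = shuffleF K (Finsupp.single R 1)
            (shuffleF K (Finsupp.single S 1) (Finsupp.single T 1)) :=
  Ncount3_and_shuffle_assoc_general K R S T V
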